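/- Let c ∈ (0,1) and α, β > 0 satisfy 2βc/α = Ī_c, where Ī_c = c·exp(α/2) + (1 − c)·exp(−α/2). Then for every η ∈ [0,1], with t₀ = (2/(2β + α))·ln(2βc/(α·I_η)) the minimizer of C₁(·, η), the following are equivalent: t₀ > 0; 2βc/(α·I_η) > 1; I_η < Ī_c; and η > 1 − c. In particular, t₀ and η − (1 − c) always have the same sign. -/

import Mathlib

/-!
Since `I_η` is affine in `η` with slope `exp(−α/2) − exp(α/2) < 0`, it is strictly decreasing, and
`Ī_c` is its value at `η = 1 − c`. The constraint `2βc/α = Ī_c` turns `t₀` into a positive multiple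
of `ln(Ī_c/I_η)`, whose sign is that of `Ī_c − I_η`, hence that of `η − (1 − c)`.
-/

/-- `I_η = η·exp(−α/2) + (1 − η)·exp(α/2)`. -/
noncomputable def Ieta (α η : ℝ) : ℝ :=
  η * Real.exp (-α / 2) + (1 - η) * Real.exp (α / 2)

/-- `Ī_c = c·exp(α/2) + (1 − c)·exp(−α/2)`. -/
noncomputable def Ibar (c α : ℝ) : ℝ :=
  c * Real.exp (α / 2) + (1 - c) * Real.exp (-α / 2)

theorem mul_log_div_pos_iff {k x y : ℝ} (hk : 0 < k) (hx : 0 < x) (hy : 0 < y) :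
    0 < k * Real.log (x / y) ↔ y < x := by
  rw [mul_pos_iff_of_pos_left hk, Real.log_pos_iff (div_pos hx hy).le, one_lt_div hy]

theorem mul_log_div_neg_iff {k x y : ℝ} (hk : 0 < k) (hx : 0 < x) (hy : 0 < y) :
    k * Real.log (x / y) < 0 ↔ x < y := by
  rw [← smul_eq_mul, smul_neg_iff_of_pos_left hk, Real.log_neg_iff (div_pos hx hy),
    div_lt_one hy]

theorem Ibar_eq_Ieta_one_sub (c α : ℝ) : Ibar c α = Ieta α (1 - c) := by
  unfold Ibar Ieta
  ring

theorem Ieta_sub_Ieta (α η η' : ℝ) :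
    Ieta α η - Ieta α η' = (η' - η) * (Real.exp (α / 2) - Real.exp (-α / 2)) := by
  unfold Ieta
  ring

section

variable {α c η : ℝ}

theorem Ieta_strictAnti (hα : 0 < α) : StrictAnti (Ieta α) := by
  intro η η' hlt
  have hexp : Real.exp (-α / 2) < Real.exp (α / 2) := Real.exp_lt_exp.mpr (by linarith)
  rw [← sub_pos, Ieta_sub_Ieta]
  exact mul_pos (sub_pos.mpr hlt) (sub_pos.mpr hexp)

theorem Ieta_pos (hα : 0 < α) (hη : η ≤ 1) : 0 < Ieta α η :=
  calc
    0 < Real.exp (-α / 2) := Real.exp_pos _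
    _ = Ieta α 1 := by simp only [Ieta, one_mul, sub_self, zero_mul, add_zero]
    _ ≤ Ieta α η := (Ieta_strictAnti hα).antitone hη

theorem Ibar_pos (hα : 0 < α) (hc : 0 ≤ c) : 0 < Ibar c α := by
  rw [Ibar_eq_Ieta_one_sub]
  exact Ieta_pos hα (sub_le_self 1 hc)

theorem Ieta_lt_Ibar_iff (hα : 0 < α) : Ieta α η < Ibar c α ↔ 1 - c < η := by
  rw [Ibar_eq_Ieta_one_sub, (Ieta_strictAnti hα).lt_iff_gt]

theorem Ibar_lt_Ieta_iff (hα : 0 < α) : Ibar c α < Ieta α η ↔ η < 1 - c := by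
  rw [Ibar_eq_Ieta_one_sub, (Ieta_strictAnti hα).lt_iff_gt]

end

theorem minimizer_sign_equivalences_general {c α β η : ℝ}
    (hα : 0 < α) (hαβ : 0 < 2 * β + α)
    (hIbar : 0 < Ibar c α) (hIeta : 0 < Ieta α η)
    (hrel : 2 * β * c / α = Ibar c α) :
    (0 < (2 / (2 * β + α)) * Real.log (2 * β * c / (α * Ieta α η)) ↔
      1 < 2 * β * c / (α * Ieta α η)) ∧
    (1 < 2 * β * c / (α * Ieta α η) ↔ Ieta α η < Ibar c α) ∧
    (Ieta α η < Ibar c α ↔ 1 - c < η) ∧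
    (0 < (2 / (2 * β + α)) * Real.log (2 * β * c / (α * Ieta α η)) ↔
      0 < η - (1 - c)) ∧
    ((2 / (2 * β + α)) * Real.log (2 * β * c / (α * Ieta α η)) < 0 ↔
      η - (1 - c) < 0) := by
  have hratio : 2 * β * c / (α * Ieta α η) = Ibar c α / Ieta α η := by rw [← div_div, hrel]
  have hk : 0 < 2 / (2 * β + α) := div_pos two_pos hαβ
  have hpos := mul_log_div_pos_iff hk hIbar hIeta
  have hneg := mul_log_div_neg_iff hk hIbar hIeta
  rw [hratio, one_lt_div hIeta, sub_pos, sub_neg]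
  exact ⟨hpos, Iff.rfl, Ieta_lt_Ibar_iff hα, hpos.trans (Ieta_lt_Ibar_iff hα),
    hneg.trans (Ibar_lt_Ieta_iff hα)⟩

/-- under the constraint `2βc/α = Ī_c`, with
`t₀ = (2/(2β + α))·ln(2βc/(α·I_η))` the minimizer of `C₁(·, η)`, the conditions
`t₀ > 0`, `2βc/(α·I_η) > 1`, `I_η < Ī_c` and `η > 1 − c` are all equivalent;
in particular `t₀` and `η − (1 − c)` always have the same sign. -/
theorem minimizer_sign_equivalences (c α β η : ℝ)
    (hc : 0 < c) (hc1 : c < 1) (hα : 0 < α) (hβ : 0 < β)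
    (hrel : 2 * β * c / α = Ibar c α)
    (hη : η ∈ Set.Icc (0 : ℝ) 1) :
    (0 < (2 / (2 * β + α)) * Real.log (2 * β * c / (α * Ieta α η)) ↔
      1 < 2 * β * c / (α * Ieta α η)) ∧
    (1 < 2 * β * c / (α * Ieta α η) ↔ Ieta α η < Ibar c α) ∧
    (Ieta α η < Ibar c α ↔ 1 - c < η) ∧
    (0 < (2 / (2 * β + α)) * Real.log (2 * β * c / (α * Ieta α η)) ↔
      0 < η - (1 - c)) ∧
    ((2 / (2 * β + α)) * Real.log (2 * β * c / (α * Ieta α η)) < 0 ↔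
      η - (1 - c) < 0) := by
  exact minimizer_sign_equivalences_general hα (by positivity) (Ibar_pos hα hc.le)
    (Ieta_pos hα hη.2) hrel
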